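/- Let 0 < μ ≤ λ be real numbers, t > 0, a ∈ ℝ, and let b : (0, t) → ℝ be measurable with ∫₀ᵗ e^{-μ(t-s)} b(s)² ds < ∞. Define C(t) = − e^{-t λ} a − ∫₀ᵗ e^{-(t-s) λ} b(s) ds. Then C(t)² ≤ 2 e^{-2 t μ} a² + (2/μ) ∫₀ᵗ e^{-(t-s) μ} b(s)² ds. -/

import Mathlib

open MeasureTheory Set

/-!
Write `w s = e^{-(t-s)μ}`. Since `(x + y)² ≤ 2x² + 2y²` and `e^{-tλ} ≤ e^{-tμ}`, it suffices to show
`I² ≤ (1/μ) ∫ w b²` for `I = ∫ e^{-(t-s)λ} b`. This is Cauchy–Schwarz with weight `w` together with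
`∫ w ≤ 1/μ`. Cauchy–Schwarz is used in its Young form `2k|b| ≤ k² + b²`, integrated against `w` and
evaluated at the optimal `k = μ|I|`; the integrability of `e^{-(t-s)λ} b` is then not needed
separately.
-/

lemma integral_exp_weight_le {μ t : ℝ} (hμ : 0 < μ) (ht : 0 < t) :
    ∫ s in Set.Ioo 0 t, Real.exp (-((t - s) * μ)) ≤ 1 / μ := by
  rw [← integral_Ioc_eq_integral_Ioo, ← intervalIntegral.integral_of_le ht.le]
  have hderiv : ∀ s ∈ Set.uIcc 0 t,
      HasDerivAt (fun s => Real.exp (-((t - s) * μ)) / μ) (Real.exp (-((t - s) * μ))) s := by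
    intro s _
    have hlin : HasDerivAt (fun s => -((t - s) * μ)) μ s := by
      simpa using (((hasDerivAt_id' s).const_sub t).mul_const μ).fun_neg
    have h := hlin.exp.div_const μ
    rwa [mul_div_cancel_right₀ _ hμ.ne'] at h
  rw [intervalIntegral.integral_eq_sub_of_hasDerivAt hderiv
    (Continuous.intervalIntegrable (by fun_prop) _ _)]
  have : 0 < Real.exp (-((t - 0) * μ)) / μ := by positivity
  simp only [sub_self, zero_mul, neg_zero, Real.exp_zero]
  linarith

/-- The weighted Cauchy–Schwarz bound on the Duhamel integral. -/
lemma sq_duhamel_integral_le {μ lam t : ℝ} (hμ : 0 < μ) (hle : μ ≤ lam) (ht : 0 < t)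
    (b : ℝ → ℝ)
    (hint : IntegrableOn (fun s => Real.exp (-((t - s) * μ)) * b s ^ 2) (Set.Ioo 0 t)) :
    (∫ s in Set.Ioo 0 t, Real.exp (-((t - s) * lam)) * b s) ^ 2 ≤
      (1 / μ) * ∫ s in Set.Ioo 0 t, Real.exp (-((t - s) * μ)) * b s ^ 2 := by
  set I := ∫ s in Set.Ioo 0 t, Real.exp (-((t - s) * lam)) * b s with hI
  set S := ∫ s in Set.Ioo 0 t, Real.exp (-((t - s) * μ)) * b s ^ 2 with hS
  have hS0 : 0 ≤ S := integral_nonneg fun s => by positivity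
  have hw : IntegrableOn (fun s => Real.exp (-((t - s) * μ))) (Set.Ioo 0 t) :=
    ((by fun_prop : Continuous fun s => Real.exp (-((t - s) * μ))).integrableOn_Icc).mono_set
      Ioo_subset_Icc_self
  have young : ∀ k : ℝ, 0 < k → |I| ≤ k / 2 * (1 / μ) + 1 / (2 * k) * S := by
    intro k hk
    have h : ‖I‖ ≤ ∫ s in Set.Ioo 0 t, (k / 2 * Real.exp (-((t - s) * μ))
        + 1 / (2 * k) * (Real.exp (-((t - s) * μ)) * b s ^ 2)) := by
      refine norm_integral_le_of_norm_le ((hw.const_mul _).add (hint.const_mul _)) ?_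
      refine (ae_restrict_iff' measurableSet_Ioo).2 (Filter.Eventually.of_forall fun s hs => ?_)
      have hexp : Real.exp (-((t - s) * lam)) ≤ Real.exp (-((t - s) * μ)) := by
        apply Real.exp_le_exp.2
        nlinarith [hs.2]
      have hyoung : |b s| ≤ k / 2 + 1 / (2 * k) * b s ^ 2 := by
        have : k / 2 + 1 / (2 * k) * b s ^ 2 - |b s| = (k - |b s|) ^ 2 / (2 * k) := by
          rw [← sq_abs (b s)]
          field_simp
          ring
        have h2 : 0 ≤ (k - |b s|) ^ 2 / (2 * k) := by positivity
        linarith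
      rw [norm_mul, Real.norm_eq_abs, Real.norm_eq_abs, Real.abs_exp]
      calc _ ≤ Real.exp (-((t - s) * μ)) * (k / 2 + 1 / (2 * k) * b s ^ 2) := by gcongr
        _ = _ := by ring
    rw [integral_add (hw.const_mul _) (hint.const_mul _), integral_const_mul,
      integral_const_mul] at h
    have := mul_le_mul_of_nonneg_left (integral_exp_weight_le hμ ht) (by positivity : 0 ≤ k / 2)
    rw [Real.norm_eq_abs] at h
    linarith
  rcases eq_or_ne I 0 with h0 | h0
  · rw [h0, zero_pow two_ne_zero]
    positivity
  · have hpos : 0 < |I| := abs_pos.2 h0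
    have h := mul_le_mul_of_nonneg_left (young (μ * |I|) (by positivity)) hpos.le
    have e : |I| * (μ * |I| / 2 * (1 / μ) + 1 / (2 * (μ * |I|)) * S)
        = |I| ^ 2 / 2 + (1 / μ * S) / 2 := by
      field_simp
    rw [e] at h
    rw [← sq_abs]
    nlinarith

/-- Estimate on the eigenfunction coefficients of the Duhamel representation: if `0 < μ ≤ λ`,
`t > 0`, `a ∈ ℝ`, `b` is measurable with `∫₀ᵗ e^{-μ(t-s)} b(s)² ds < ∞`, and
`C(t) = -e^{-tλ} a - ∫₀ᵗ e^{-(t-s)λ} b(s) ds`, then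
`C(t)² ≤ 2 e^{-2tμ} a² + (2/μ) ∫₀ᵗ e^{-(t-s)μ} b(s)² ds`. -/
theorem stmt6 (μ lam t a : ℝ) (hμ : 0 < μ) (hle : μ ≤ lam) (ht : 0 < t)
    (b : ℝ → ℝ) (hb : Measurable b)
    (hint : IntegrableOn (fun s => Real.exp (-μ * (t - s)) * b s ^ 2) (Set.Ioo 0 t))
    (C : ℝ)
    (hC : C = -Real.exp (-(t * lam)) * a - ∫ s in Set.Ioo 0 t, Real.exp (-((t - s) * lam)) * b s) :
    C ^ 2 ≤ 2 * Real.exp (-(2 * t * μ)) * a ^ 2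
      + (2 / μ) * ∫ s in Set.Ioo 0 t, Real.exp (-((t - s) * μ)) * b s ^ 2 := by
  have hint' : IntegrableOn (fun s => Real.exp (-((t - s) * μ)) * b s ^ 2) (Set.Ioo 0 t) := by
    convert hint using 4
    ring
  have hI := sq_duhamel_integral_le hμ hle ht b hint'
  set I := ∫ s in Set.Ioo 0 t, Real.exp (-((t - s) * lam)) * b s
  set S := ∫ s in Set.Ioo 0 t, Real.exp (-((t - s) * μ)) * b s ^ 2
  have hE : Real.exp (-(t * lam)) ^ 2 ≤ Real.exp (-(2 * t * μ)) := by
    rw [← Real.exp_nat_mul]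
    apply Real.exp_le_exp.2
    push_cast
    nlinarith
  have hEa := mul_le_mul_of_nonneg_right hE (sq_nonneg a)
  have hdiv : 2 / μ * S = 2 * (1 / μ * S) := by ring
  rw [hC, hdiv]
  nlinarith [sq_nonneg (Real.exp (-(t * lam)) * a - I)]
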